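/- Define for u ∈ (0,2] and v ∈ [0,u] the interpolation error ε²(u,v) = 1 − (sinc(v)² + sinc(u−v)² − 2·sinc(u)·sinc(v)·sinc(u−v))/(1 − sinc(u)²). Then for each fixed u ∈ (0,2], the maximum of ε²(u,v) over v ∈ [0,u] is attained at v = u/2 and equals 1 − 2·sinc(u/2)²/(1 + sinc(u)). -/

import Mathlib

open Real

/-- Normalized sinc: `sinc(x) = sin(πx)/(πx)` for `x ≠ 0`, `sinc(0) = 1`. -/
noncomputable def nsinc (x : ℝ) : ℝ :=
  if x = 0 then 1 else Real.sin (π * x) / (π * x)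

/-- Two-tap interpolation error `ε²(u,v)`. -/
noncomputable def interpErr (u v : ℝ) : ℝ :=
  1 - (nsinc v ^ 2 + nsinc (u - v) ^ 2 - 2 * nsinc u * nsinc v * nsinc (u - v))
      / (1 - nsinc u ^ 2)

/-!
Put `h = πu/2`, `x = π(v - u/2)` and let `S` be the unnormalized sinc. Since
`a² + b² - 2cab = (a - b)² + 2(1 - c)ab`, maximality at the midpoint says
`2(1 - S(2h))(S(h)² - S(h+x)S(h-x)) ≤ (S(h+x) - S(h-x))²` for `0 ≤ x ≤ h ≤ π`.

In terms of `g(y) = y cot y`, with `Δ = g(x) - g(h)`, this becomes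
`(h² - x²)(g(h)² - g(h) + h²)(S(x)² - S(h)²) ≤ 2h²S(x)²Δ²`, which chains
`(h² - x²)(g(h)² - g(h) + h²) ≤ h²Δ(2 + Δ)` with `(2 + Δ)(S(x)² - S(h)²) ≤ 2ΔS(x)²`.
The second comes from `2(t - 1)/(t + 1) ≤ log t` at `t = S(x)²/S(h)²`. Both then follow by
monotonicity from the Riccati equation `y g' = g - g² - y²` and the single bound
`(1 - g)(2 + g) ≤ y²`, which is the Cusa–Huygens inequality `3 sin z ≤ z(2 + cos z)` integrated
once, at `z = 2y`.
-/

section Monotonicity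

variable {D : Set ℝ} {f f' : ℝ → ℝ}

lemma monotoneOn_of_hasDerivAt_nonneg (hD : Convex ℝ D) (hf : ∀ y ∈ D, HasDerivAt f (f' y) y)
    (hf' : ∀ y ∈ D, 0 ≤ f' y) : MonotoneOn f D :=
  monotoneOn_of_hasDerivWithinAt_nonneg hD
    (fun y hy ↦ (hf y hy).continuousAt.continuousWithinAt)
    (fun y hy ↦ (hf y (interior_subset hy)).hasDerivWithinAt)
    (fun y hy ↦ hf' y (interior_subset hy))

lemma antitoneOn_of_hasDerivAt_nonpos (hD : Convex ℝ D) (hf : ∀ y ∈ D, HasDerivAt f (f' y) y)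
    (hf' : ∀ y ∈ D, f' y ≤ 0) : AntitoneOn f D :=
  antitoneOn_of_hasDerivWithinAt_nonpos hD
    (fun y hy ↦ (hf y hy).continuousAt.continuousWithinAt)
    (fun y hy ↦ (hf y (interior_subset hy)).hasDerivWithinAt)
    (fun y hy ↦ hf' y (interior_subset hy))

lemma apply_left_le_of_hasDerivAt_nonneg {a b z : ℝ} (hz : z ∈ Set.Icc a b)
    (hf : ∀ y ∈ Set.Icc a b, HasDerivAt f (f' y) y) (hf' : ∀ y ∈ Set.Icc a b, 0 ≤ f' y) :
    f a ≤ f z :=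
  monotoneOn_of_hasDerivAt_nonneg (convex_Icc a b) hf hf'
    (Set.left_mem_Icc.2 (hz.1.trans hz.2)) hz hz.1

end Monotonicity

section TrigBounds

variable {z : ℝ}

lemma mul_cos_le_sin (hz : z ∈ Set.Icc 0 π) : z * cos z ≤ sin z := by
  have hderiv (y : ℝ) : HasDerivAt (fun y ↦ sin y - y * cos y) (y * sin y) y := by
    convert! (hasDerivAt_sin y).sub ((hasDerivAt_id y).mul (hasDerivAt_cos y)) using 1
    simp
  have h := apply_left_le_of_hasDerivAt_nonneg hz (fun y _ ↦ hderiv y)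
    fun y hy ↦ mul_nonneg hy.1 (sin_nonneg_of_mem_Icc hy)
  simpa using h

lemma mul_sin_le_two_mul_one_sub_cos (hz : z ∈ Set.Icc 0 (2 * π)) :
    z * sin z ≤ 2 * (1 - cos z) := by
  obtain ⟨y, rfl⟩ : ∃ y, z = 2 * y := ⟨z / 2, by ring⟩
  have hy : y ∈ Set.Icc 0 π := ⟨by linarith [hz.1], by linarith [hz.2]⟩
  rw [sin_two_mul, cos_two_mul, cos_sq']
  nlinarith [mul_le_mul_of_nonneg_left (mul_cos_le_sin hy) (sin_nonneg_of_mem_Icc hy)]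

lemma three_mul_sin_le_mul_two_add_cos (hz : z ∈ Set.Icc 0 (2 * π)) :
    3 * sin z ≤ z * (2 + cos z) := by
  have hderiv (y : ℝ) : HasDerivAt (fun y ↦ y * (2 + cos y) - 3 * sin y)
      (2 * (1 - cos y) - y * sin y) y := by
    convert! ((hasDerivAt_id y).mul ((hasDerivAt_cos y).const_add 2)).sub
      ((hasDerivAt_sin y).const_mul 3) using 1
    simp only [id]
    ring
  have h := apply_left_le_of_hasDerivAt_nonneg hz (fun y _ ↦ hderiv y)
    fun y hy ↦ sub_nonneg.2 (mul_sin_le_two_mul_one_sub_cos hy)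
  simpa using h

lemma four_mul_one_sub_cos_le_sq_add_mul_sin (hz : z ∈ Set.Icc 0 (2 * π)) :
    4 * (1 - cos z) ≤ z ^ 2 + z * sin z := by
  have hderiv (y : ℝ) : HasDerivAt (fun y ↦ y ^ 2 + y * sin y - 4 * (1 - cos y))
      (y * (2 + cos y) - 3 * sin y) y := by
    convert! ((hasDerivAt_pow 2 y).add ((hasDerivAt_id y).mul (hasDerivAt_sin y))).sub
      (((hasDerivAt_cos y).const_sub 1).const_mul 4) using 1
    simp only [id]
    ring
  have h := apply_left_le_of_hasDerivAt_nonneg hz (fun y _ ↦ hderiv y)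
    fun y hy ↦ sub_nonneg.2 (three_mul_sin_le_mul_two_add_cos hy)
  simpa using h

end TrigBounds

section Sinc

lemma nsinc_eq_sinc (x : ℝ) : nsinc x = sinc (π * x) := by
  simp [nsinc, sinc, pi_ne_zero]

lemma mul_sinc (y : ℝ) : y * sinc y = sin y := by
  rcases eq_or_ne y 0 with rfl | hy
  · simp
  · rw [sinc_of_ne_zero hy, mul_div_cancel₀ _ hy]

lemma abs_sinc_lt_one {y : ℝ} (hy : y ≠ 0) : |sinc y| < 1 := by
  rw [sinc_of_ne_zero hy, abs_div, div_lt_one (abs_pos.2 hy)]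
  exact abs_sin_lt_abs hy

lemma sinc_pi : sinc π = 0 := by
  rw [sinc_of_ne_zero pi_ne_zero, sin_pi, zero_div]

lemma sinc_two_mul (y : ℝ) : sinc (2 * y) = sinc y * cos y := by
  rcases eq_or_ne y 0 with rfl | hy
  · simp
  · rw [sinc_of_ne_zero (mul_ne_zero two_ne_zero hy), sinc_of_ne_zero hy, sin_two_mul]
    field_simp

lemma sinc_pos {y : ℝ} (hy : y ∈ Set.Ioo 0 π) : 0 < sinc y := by
  rw [sinc_of_ne_zero hy.1.ne']
  exact div_pos (sin_pos_of_mem_Ioo hy) hy.1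

lemma hasDerivAt_sinc {y : ℝ} (hy : y ≠ 0) : HasDerivAt sinc ((cos y - sinc y) / y) y := by
  have hquot : HasDerivAt (fun t ↦ sin t / t) ((cos y - sinc y) / y) y := by
    convert! (hasDerivAt_sin y).div (hasDerivAt_id y) hy using 1
    rw [sinc_of_ne_zero hy, id]
    field_simp
  refine hquot.congr_of_eventuallyEq ?_
  filter_upwards [isOpen_ne.mem_nhds hy] with t ht using sinc_of_ne_zero ht

lemma antitoneOn_sinc : AntitoneOn sinc (Set.Icc 0 π) := by
  refine antitoneOn_of_hasDerivWithinAt_nonpos (f' := fun y ↦ (cos y - sinc y) / y)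
    (convex_Icc 0 π) continuous_sinc.continuousOn ?_ ?_
  all_goals
    intro y hy
    rw [interior_Icc] at hy
  · exact (hasDerivAt_sinc hy.1.ne').hasDerivWithinAt
  · refine div_nonpos_of_nonpos_of_nonneg ?_ hy.1.le
    rw [sub_nonpos, sinc_of_ne_zero hy.1.ne', le_div_iff₀ hy.1, mul_comm]
    exact mul_cos_le_sin (Set.Ioo_subset_Icc_self hy)

lemma sinc_sq_le_sinc_sq {x h : ℝ} (hx : 0 ≤ x) (hxh : x ≤ h) (hh : h ≤ π) :
    sinc h ^ 2 ≤ sinc x ^ 2 := by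
  have hhπ : h ∈ Set.Icc 0 π := ⟨hx.trans hxh, hh⟩
  have hnonneg : 0 ≤ sinc h :=
    sinc_pi.ge.trans (antitoneOn_sinc hhπ (Set.right_mem_Icc.2 pi_pos.le) hh)
  exact pow_le_pow_left₀ hnonneg (antitoneOn_sinc ⟨hx, hxh.trans hh⟩ hhπ hxh) 2

lemma sq_sub_sq_mul_sinc_sq_sub (h x : ℝ) :
    (h ^ 2 - x ^ 2) * (sinc h ^ 2 - sinc (h + x) * sinc (h - x)) =
      x ^ 2 * (sinc x ^ 2 - sinc h ^ 2) := by
  have hprod : (h + x) * sinc (h + x) * ((h - x) * sinc (h - x)) =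
      (h * sinc h) ^ 2 - (x * sinc x) ^ 2 := by
    simp only [mul_sinc, sin_add, sin_sub]
    linear_combination sin h ^ 2 * sin_sq_add_cos_sq x - sin x ^ 2 * sin_sq_add_cos_sq h
  linear_combination -hprod

lemma sq_sub_sq_mul_sinc_add_sub_sinc_sub (h x : ℝ) :
    (h ^ 2 - x ^ 2) * (sinc (h + x) - sinc (h - x)) =
      2 * (h * cos h * sin x - x * cos x * sin h) := by
  have hadd := mul_sinc (h + x)
  have hsub := mul_sinc (h - x)
  rw [sin_add] at hadd
  rw [sin_sub] at hsub
  linear_combination (h - x) * hadd - (h + x) * hsub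

end Sinc

/-- The function `y ↦ y cot y`, through which the argument is carried out on `(0, π)`. It takes
the junk value `0` at `y = 0`, where the continuous extension would be `1`. -/
noncomputable def mulCot (y : ℝ) : ℝ := y * cot y

/-- The rate of decrease `-y g'(y)` of `g = mulCot`, written as a polynomial in `g` and `y` by means
of the Riccati equation `hasDerivAt_mulCot`. -/
noncomputable def mulCotDecay (y : ℝ) : ℝ := mulCot y ^ 2 - mulCot y + y ^ 2

section MulCot

variable {x h y : ℝ}

lemma cos_eq_mulCot_mul_sinc (hy : sin y ≠ 0) : cos y = mulCot y * sinc y := by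
  rw [mulCot, mul_right_comm, mul_sinc, cot_eq_cos_div_sin, mul_div_cancel₀ _ hy]

lemma sinc_sq_mul_mulCot_sq_add_sq (hy : sin y ≠ 0) :
    sinc y ^ 2 * (mulCot y ^ 2 + y ^ 2) = 1 := by
  rw [← sin_sq_add_cos_sq y, cos_eq_mulCot_mul_sinc hy, ← mul_sinc y]
  ring

lemma one_sub_sinc_two_mul (hy : sin y ≠ 0) :
    1 - sinc (2 * y) = sinc y ^ 2 * mulCotDecay y := by
  rw [sinc_two_mul, cos_eq_mulCot_mul_sinc hy, mulCotDecay]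
  linear_combination -sinc_sq_mul_mulCot_sq_add_sq hy

lemma ne_zero_of_sin_ne_zero (hy : sin y ≠ 0) : y ≠ 0 := by
  rintro rfl
  exact hy sin_zero

lemma hasDerivAt_mulCot (hy : sin y ≠ 0) : HasDerivAt mulCot (-(mulCotDecay y / y)) y := by
  have hy0 := ne_zero_of_sin_ne_zero hy
  have hfun : mulCot = fun t ↦ t * (cos t / sin t) :=
    funext fun t ↦ by rw [mulCot, cot_eq_cos_div_sin]
  rw [mulCotDecay, hfun]
  convert! (hasDerivAt_id y).mul ((hasDerivAt_cos y).div (hasDerivAt_sin y) hy) using 1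
  simp only [id, Pi.div_apply]
  field_simp
  ring

lemma hasDerivAt_mulCotDecay (hy : sin y ≠ 0) :
    HasDerivAt mulCotDecay ((2 * y ^ 2 - (2 * mulCot y - 1) * mulCotDecay y) / y) y := by
  have hy0 := ne_zero_of_sin_ne_zero hy
  have hg := hasDerivAt_mulCot hy
  convert! ((hg.pow 2).sub hg).add (hasDerivAt_pow 2 y) using 1
  field_simp
  ring

lemma one_sub_mulCot_mul_two_add_le_sq (hy : y ∈ Set.Ioo 0 π) :
    (1 - mulCot y) * (2 + mulCot y) ≤ y ^ 2 := by
  have hsin := (sin_pos_of_mem_Ioo hy).ne'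
  have hbound := four_mul_one_sub_cos_le_sq_add_mul_sin (z := 2 * y)
    ⟨by linarith [hy.1], by linarith [hy.2]⟩
  rw [cos_two_mul, sin_two_mul, cos_sq', cos_eq_mulCot_mul_sinc hsin, ← mul_sinc y] at hbound
  have hpos : 0 < y ^ 2 * sinc y ^ 2 := by
    have := hy.1
    have := sinc_pos hy
    positivity
  refine le_of_mul_le_mul_left ?_ hpos
  linear_combination hbound / 4 - y ^ 2 * sinc_sq_mul_mulCot_sq_add_sq hsin

lemma two_mul_sq_le_three_mul_mulCotDecay (hy : y ∈ Set.Ioo 0 π) :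
    2 * y ^ 2 ≤ 3 * mulCotDecay y := by
  rw [mulCotDecay]
  nlinarith [one_sub_mulCot_mul_two_add_le_sq hy, sq_nonneg (1 - mulCot y)]

lemma mulCotDecay_nonneg (hy : y ∈ Set.Ioo 0 π) : 0 ≤ mulCotDecay y := by
  linarith [two_mul_sq_le_three_mul_mulCotDecay hy, sq_nonneg y]

lemma antitoneOn_mulCot : AntitoneOn mulCot (Set.Ioo 0 π) :=
  antitoneOn_of_hasDerivAt_nonpos (convex_Ioo 0 π)
    (fun _ hy ↦ hasDerivAt_mulCot (sin_pos_of_mem_Ioo hy).ne')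
    fun _ hy ↦ neg_nonpos.2 (div_nonneg (mulCotDecay_nonneg hy) hy.1.le)

lemma monotoneOn_one_sub_mulCot_div_sq :
    MonotoneOn (fun y ↦ (1 - mulCot y) / y ^ 2) (Set.Ioo 0 π) := by
  refine monotoneOn_of_hasDerivAt_nonneg (convex_Ioo 0 π)
    (f' := fun y ↦ (y ^ 2 - (1 - mulCot y) * (2 + mulCot y)) / y ^ 3) (fun y hy ↦ ?_)
    fun y hy ↦ div_nonneg (sub_nonneg.2 (one_sub_mulCot_mul_two_add_le_sq hy))
      (pow_nonneg hy.1.le 3)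
  have hy0 := hy.1.ne'
  convert! ((hasDerivAt_mulCot (sin_pos_of_mem_Ioo hy).ne').const_sub 1).div
    (hasDerivAt_pow 2 y) (pow_ne_zero 2 hy0) using 1
  rw [mulCotDecay]
  field_simp
  ring

lemma antitoneOn_mulCot_sub_two_mul_log_sinc :
    AntitoneOn (fun y ↦ mulCot y - 2 * log (sinc y)) (Set.Ioo 0 π) := by
  refine antitoneOn_of_hasDerivAt_nonpos (convex_Ioo 0 π)
    (f' := fun y ↦ ((1 - mulCot y) * (2 + mulCot y) - y ^ 2) / y) (fun y hy ↦ ?_)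
    fun y hy ↦ div_nonpos_of_nonpos_of_nonneg
      (sub_nonpos.2 (one_sub_mulCot_mul_two_add_le_sq hy)) hy.1.le
  have hy0 := hy.1.ne'
  have hsin := (sin_pos_of_mem_Ioo hy).ne'
  have hsinc := (sinc_pos hy).ne'
  convert! (hasDerivAt_mulCot hsin).sub
    (((hasDerivAt_sinc hy0).log hsinc).const_mul 2) using 1
  rw [cos_eq_mulCot_mul_sinc hsin, mulCotDecay]
  field_simp
  ring

lemma two_add_mul_sinc_sq_sub_le (hx : x ∈ Set.Ioo 0 π) (hh : h ∈ Set.Ioo 0 π) (hxh : x ≤ h) :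
    (2 + (mulCot x - mulCot h)) * (sinc x ^ 2 - sinc h ^ 2) ≤
      2 * (mulCot x - mulCot h) * sinc x ^ 2 := by
  have hSx := sinc_pos hx
  have hSh := sinc_pos hh
  have hratio : 0 ≤ sinc x ^ 2 / sinc h ^ 2 - 1 := by
    rw [sub_nonneg, one_le_div (by positivity)]
    exact sinc_sq_le_sinc_sq hx.1.le hxh hh.2.le
  have hlog : log (sinc x ^ 2 / sinc h ^ 2) ≤ mulCot x - mulCot h := by
    rw [log_div (by positivity) (by positivity), log_pow, log_pow]
    have := antitoneOn_mulCot_sub_two_mul_log_sinc hx hh hxh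
    push_cast
    linarith
  have hpade : 2 * (sinc x ^ 2 / sinc h ^ 2 - 1) / (sinc x ^ 2 / sinc h ^ 2 - 1 + 2) ≤
      mulCot x - mulCot h :=
    (le_log_one_add_of_nonneg hratio).trans (by rwa [add_sub_cancel])
  rw [div_le_iff₀ (by linarith)] at hpade
  field_simp at hpade
  linarith

lemma sq_sub_sq_mul_one_sub_mulCot_le (hx : x ∈ Set.Ioo 0 π) (hy : y ∈ Set.Ioo 0 π)
    (hxy : x ≤ y) :
    (y ^ 2 - x ^ 2) * (1 - mulCot y) ≤ y ^ 2 * (mulCot x - mulCot y) := by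
  have hmono := monotoneOn_one_sub_mulCot_div_sq hx hy hxy
  rw [div_le_div_iff₀ (pow_pos hx.1 2) (pow_pos hy.1 2)] at hmono
  linarith

lemma monotoneOn_mulCot_sub_mul_two_add_sub (hx : 0 < x) :
    MonotoneOn (fun y ↦ (mulCot x - mulCot y) * (2 + (mulCot x - mulCot y)) -
      (1 - x ^ 2 / y ^ 2) * mulCotDecay y) (Set.Ico x π) := by
  refine monotoneOn_of_hasDerivAt_nonneg (convex_Ico x π)
    (f' := fun y ↦ (2 * mulCotDecay y *
        (y ^ 2 * (mulCot x - mulCot y) - (y ^ 2 - x ^ 2) * (1 - mulCot y)) +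
      (y ^ 2 - x ^ 2) * (3 * mulCotDecay y - 2 * y ^ 2)) / y ^ 3)
    (fun y hy ↦ ?_) (fun y hy ↦ ?_)
  all_goals have hy' : y ∈ Set.Ioo 0 π := ⟨hx.trans_le hy.1, hy.2⟩
  · have hy0 := hy'.1.ne'
    have hsin := (sin_pos_of_mem_Ioo hy').ne'
    have hΔ := (hasDerivAt_mulCot hsin).const_sub (mulCot x)
    have hweight := ((hasDerivAt_const y (x ^ 2)).div (hasDerivAt_pow 2 y)
      (pow_ne_zero 2 hy0)).const_sub 1
    convert! (hΔ.mul (hΔ.const_add 2)).sub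
      (hweight.mul (hasDerivAt_mulCotDecay hsin)) using 1
    simp only [Pi.div_apply]
    field_simp
    ring
  · have hchord := sq_sub_sq_mul_one_sub_mulCot_le ⟨hx, hy.1.trans_lt hy.2⟩ hy' hy.1
    have hslope := mulCotDecay_nonneg hy'
    have hthree := two_mul_sq_le_three_mul_mulCotDecay hy'
    have hsq : x ^ 2 ≤ y ^ 2 := pow_le_pow_left₀ hx.le hy.1 2
    exact div_nonneg
      (add_nonneg (mul_nonneg (by positivity) (sub_nonneg.2 hchord))
        (mul_nonneg (sub_nonneg.2 hsq) (sub_nonneg.2 hthree)))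
      (pow_nonneg hy'.1.le 3)

lemma sq_sub_sq_mul_mulCotDecay_le (hx : x ∈ Set.Ioo 0 π) (hh : h ∈ Set.Ioo 0 π)
    (hxh : x ≤ h) :
    (h ^ 2 - x ^ 2) * mulCotDecay h ≤
      h ^ 2 * ((mulCot x - mulCot h) * (2 + (mulCot x - mulCot h))) := by
  have hmono := monotoneOn_mulCot_sub_mul_two_add_sub hx.1 ⟨le_rfl, hx.2⟩ ⟨hxh, hh.2⟩ hxh
  have hx0 := hx.1.ne'
  have hh0 := hh.1.ne'
  simp only [sub_self, zero_mul, div_self (pow_ne_zero 2 hx0), sub_nonneg] at hmono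
  calc (h ^ 2 - x ^ 2) * mulCotDecay h
      = h ^ 2 * ((1 - x ^ 2 / h ^ 2) * mulCotDecay h) := by
        field_simp
    _ ≤ h ^ 2 * ((mulCot x - mulCot h) * (2 + (mulCot x - mulCot h))) :=
        mul_le_mul_of_nonneg_left hmono (sq_nonneg h)

lemma sq_sub_sq_mul_mulCotDecay_mul_sinc_sq_sub_le (hx : x ∈ Set.Ioo 0 π)
    (hh : h ∈ Set.Ioo 0 π) (hxh : x ≤ h) :
    (h ^ 2 - x ^ 2) * mulCotDecay h * (sinc x ^ 2 - sinc h ^ 2) ≤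
      2 * h ^ 2 * sinc x ^ 2 * (mulCot x - mulCot h) ^ 2 := by
  have hΔ : 0 ≤ mulCot x - mulCot h := sub_nonneg.2 (antitoneOn_mulCot hx hh hxh)
  have hS : 0 ≤ sinc x ^ 2 - sinc h ^ 2 :=
    sub_nonneg.2 (sinc_sq_le_sinc_sq hx.1.le hxh hh.2.le)
  calc (h ^ 2 - x ^ 2) * mulCotDecay h * (sinc x ^ 2 - sinc h ^ 2)
      ≤ h ^ 2 * ((mulCot x - mulCot h) * (2 + (mulCot x - mulCot h))) *
          (sinc x ^ 2 - sinc h ^ 2) :=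
        mul_le_mul_of_nonneg_right (sq_sub_sq_mul_mulCotDecay_le hx hh hxh) hS
    _ = h ^ 2 * (mulCot x - mulCot h) *
          ((2 + (mulCot x - mulCot h)) * (sinc x ^ 2 - sinc h ^ 2)) := by ring
    _ ≤ h ^ 2 * (mulCot x - mulCot h) * (2 * (mulCot x - mulCot h) * sinc x ^ 2) :=
        mul_le_mul_of_nonneg_left (two_add_mul_sinc_sq_sub_le hx hh hxh) (by positivity)
    _ = 2 * h ^ 2 * sinc x ^ 2 * (mulCot x - mulCot h) ^ 2 := by ring

end MulCot

section MidpointInequality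

variable {x h : ℝ}

lemma two_mul_one_sub_sinc_mul_le_of_mem_Ioo (hx : x ∈ Set.Ioo 0 h) (hh : h < π) :
    2 * (1 - sinc (2 * h)) * (sinc h ^ 2 - sinc (h + x) * sinc (h - x)) ≤
      (sinc (h + x) - sinc (h - x)) ^ 2 := by
  have hxπ : x ∈ Set.Ioo 0 π := ⟨hx.1, hx.2.trans hh⟩
  have hhπ : h ∈ Set.Ioo 0 π := ⟨hx.1.trans hx.2, hh⟩
  have hsinx := (sin_pos_of_mem_Ioo hxπ).ne'
  have hsinh := (sin_pos_of_mem_Ioo hhπ).ne'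
  have hK : 0 < h ^ 2 - x ^ 2 := sub_pos.2 (pow_lt_pow_left₀ hx.2 hx.1.le two_ne_zero)
  have hdiff : (h ^ 2 - x ^ 2) * (sinc (h + x) - sinc (h - x)) =
      2 * x * h * sinc x * sinc h * (mulCot h - mulCot x) := by
    rw [sq_sub_sq_mul_sinc_add_sub_sinc_sub, cos_eq_mulCot_mul_sinc hsinx,
      cos_eq_mulCot_mul_sinc hsinh, ← mul_sinc x, ← mul_sinc h]
    ring
  refine le_of_mul_le_mul_left ?_ (pow_pos hK 2)
  calc (h ^ 2 - x ^ 2) ^ 2 *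
        (2 * (1 - sinc (2 * h)) * (sinc h ^ 2 - sinc (h + x) * sinc (h - x)))
      = 2 * (1 - sinc (2 * h)) * (h ^ 2 - x ^ 2) *
          ((h ^ 2 - x ^ 2) * (sinc h ^ 2 - sinc (h + x) * sinc (h - x))) := by ring
    _ = 2 * x ^ 2 * sinc h ^ 2 * ((h ^ 2 - x ^ 2) * mulCotDecay h *
          (sinc x ^ 2 - sinc h ^ 2)) := by
        rw [sq_sub_sq_mul_sinc_sq_sub, one_sub_sinc_two_mul hsinh]
        ring
    _ ≤ 2 * x ^ 2 * sinc h ^ 2 * (2 * h ^ 2 * sinc x ^ 2 * (mulCot x - mulCot h) ^ 2) :=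
        mul_le_mul_of_nonneg_left (sq_sub_sq_mul_mulCotDecay_mul_sinc_sq_sub_le hxπ hhπ hx.2.le)
          (by positivity)
    _ = ((h ^ 2 - x ^ 2) * (sinc (h + x) - sinc (h - x))) ^ 2 := by rw [hdiff]; ring
    _ = (h ^ 2 - x ^ 2) ^ 2 * (sinc (h + x) - sinc (h - x)) ^ 2 := by ring

lemma two_mul_one_sub_sinc_mul_le (hh : h ∈ Set.Ioc 0 π) (hx : |x| ≤ h) :
    2 * (1 - sinc (2 * h)) * (sinc h ^ 2 - sinc (h + x) * sinc (h - x)) ≤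
      (sinc (h + x) - sinc (h - x)) ^ 2 := by
  wlog hx0 : 0 ≤ x generalizing x
  · have hneg := this (x := -x) (by rwa [abs_neg]) (by linarith)
    rw [← sub_eq_add_neg, sub_neg_eq_add] at hneg
    linarith
  rcases hh.2.eq_or_lt with rfl | hlt
  · rw [sinc_two_mul, sinc_pi]
    linarith [sq_nonneg (sinc (π + x)), sq_nonneg (sinc (π - x))]
  · have hclosure : x ∈ closure (Set.Ioo 0 h) := by
      rw [closure_Ioo hh.1.ne]
      exact ⟨hx0, (le_abs_self x).trans hx⟩
    refine le_on_closure (fun t ht ↦ two_mul_one_sub_sinc_mul_le_of_mem_Ioo ht hlt)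
      ?_ ?_ hclosure <;> fun_prop

end MidpointInequality

lemma two_mul_one_sub_nsinc_mul_sq_le {u v : ℝ} (hu : u ∈ Set.Ioc 0 2) (hv : v ∈ Set.Icc 0 u) :
    2 * (1 - nsinc u) * nsinc (u / 2) ^ 2 ≤
      nsinc v ^ 2 + nsinc (u - v) ^ 2 - 2 * nsinc u * nsinc v * nsinc (u - v) := by
  have hmid := two_mul_one_sub_sinc_mul_le (h := π * (u / 2)) (x := π * (v - u / 2))
    ⟨mul_pos pi_pos (half_pos hu.1), mul_le_of_le_one_right pi_pos.le (by linarith [hu.2])⟩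
    (by
      rw [abs_mul, abs_of_pos pi_pos]
      exact mul_le_mul_of_nonneg_left
        (abs_le.2 ⟨by linarith [hv.1], by linarith [hv.2]⟩) pi_pos.le)
  rw [show 2 * (π * (u / 2)) = π * u by ring,
    show π * (u / 2) + π * (v - u / 2) = π * v by ring,
    show π * (u / 2) - π * (v - u / 2) = π * (u - v) by ring] at hmid
  simp only [← nsinc_eq_sinc] at hmid
  linarith

lemma interpErr_half {u : ℝ} (hu : u ≠ 0) :
    interpErr u (u / 2) = 1 - 2 * nsinc (u / 2) ^ 2 / (1 + nsinc u) := by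
  have hlt := abs_lt.1 (abs_sinc_lt_one (mul_ne_zero pi_ne_zero hu))
  rw [← nsinc_eq_sinc] at hlt
  have hsub : 1 - nsinc u ≠ 0 := by linarith [hlt.2]
  rw [interpErr, sub_half, show 1 - nsinc u ^ 2 = (1 - nsinc u) * (1 + nsinc u) by ring,
    ← mul_div_mul_left (2 * nsinc (u / 2) ^ 2) _ hsub]
  ring

/-- For fixed `u ∈ (0,2]`, the maximum of the two-tap interpolation error `ε²(u,v)`
over `v ∈ [0,u]` is attained at `v = u/2`, and equals `1 − 2 sinc(u/2)²/(1 + sinc u)`. -/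
theorem stmt_5 (u : ℝ) (hu : u ∈ Set.Ioc (0 : ℝ) 2) :
    IsMaxOn (interpErr u) (Set.Icc 0 u) (u / 2) ∧
    interpErr u (u / 2) = 1 - 2 * nsinc (u / 2) ^ 2 / (1 + nsinc u) := by
  refine ⟨isMaxOn_iff.2 fun v hv ↦ ?_, interpErr_half hu.1.ne'⟩
  have hden : 0 ≤ 1 - nsinc u ^ 2 := by
    rw [sub_nonneg, sq_le_one_iff_abs_le_one, nsinc_eq_sinc]
    exact abs_sinc_le_one _
  have hnum := two_mul_one_sub_nsinc_mul_sq_le hu hv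
  refine sub_le_sub_left (div_le_div_of_nonneg_right ?_ hden) 1
  rw [sub_half]
  linarith
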